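/- If gcd(i,j) = 1 and i ≥ j, then there is an A-algebra isomorphism R(A;i,j) ≅ M₂(A[s,t]/I), where I is the ideal of A[s,t] generated by f(i+j), f(i+j−1) − s^{j−1}, and s^{i−j} − (−1)^{i−j}. -/

import Mathlib

/-- The defining relations for `R(A;i,j)`: `x^i*y + y*x^j = 1` and `y^2 = 0`,
where `x` and `y` are the two generators of the free algebra. -/
inductive MatRel (A : Type*) [CommRing A] (i j : ℕ) :
    FreeAlgebra A (Fin 2) → FreeAlgebra A (Fin 2) → Prop
  | rel1 : MatRel A i j
      (FreeAlgebra.ι A (0 : Fin 2) ^ i * FreeAlgebra.ι A (1 : Fin 2) +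
        FreeAlgebra.ι A (1 : Fin 2) * FreeAlgebra.ι A (0 : Fin 2) ^ j) 1
  | rel2 : MatRel A i j (FreeAlgebra.ι A (1 : Fin 2) ^ 2) 0

/-- `R(A;i,j)`, the quotient of the free `A`-algebra on `x, y` by the two-sided ideal
generated by `x^i*y + y*x^j - 1` and `y^2`. -/
abbrev MatRing (A : Type*) [CommRing A] (i j : ℕ) : Type _ := RingQuot (MatRel A i j)

/-- The image of the generator `x` in `R(A;i,j)`. -/
noncomputable def Xgen (A : Type*) [CommRing A] (i j : ℕ) : MatRing A i j :=
  RingQuot.mkAlgHom A (MatRel A i j) (FreeAlgebra.ι A (0 : Fin 2))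

/-- The image of the generator `y` in `R(A;i,j)`. -/
noncomputable def Ygen (A : Type*) [CommRing A] (i j : ℕ) : MatRing A i j :=
  RingQuot.mkAlgHom A (MatRel A i j) (FreeAlgebra.ι A (1 : Fin 2))

/-- The recursively defined polynomials `f(0) = 0`, `f(1) = 1`,
`f(n) = t*f(n-1) + s*f(n-2)`, in `A[s,t]` where `s = X 0` and `t = X 1`. -/
noncomputable def fpoly (A : Type*) [CommRing A] : ℕ → MvPolynomial (Fin 2) A
  | 0 => 0
  | 1 => 1
  | (n + 2) => MvPolynomial.X 1 * fpoly A (n + 1) + MvPolynomial.X 0 * fpoly A n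

lemma exists_mul_eq_mul_add_one {i j : ℕ} (hi : 1 ≤ i) (hj : 1 ≤ j) (h : Nat.gcd i j = 1) :
    ∃ k l, i * k = j * l + 1 := by
  obtain ⟨n, hn, hn'⟩ := Nat.chineseRemainder h 0 1
  have h1 : i ∣ n + i * j := (Nat.modEq_zero_iff_dvd.mp hn).add (dvd_mul_right _ _)
  have hpos : 1 ≤ n + i * j := by nlinarith
  have h2 : j ∣ n + i * j - 1 := by
    apply (Nat.modEq_iff_dvd' hpos).mp
    simpa using (hn'.symm.add (Nat.modEq_zero_iff_dvd.mpr (dvd_mul_left j i)).symm)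
  obtain ⟨k, hk⟩ := h1
  obtain ⟨l, hl⟩ := h2
  exact ⟨k, l, by omega⟩

/-- The Lucas sequence of the first kind: `U 0 = 0`, `U 1 = 1`, `U (n+2) = t * U (n+1) + s * U n`. -/
def lucasU {C : Type*} [CommRing C] (s t : C) : ℕ → C
  | 0 => 0
  | 1 => 1
  | (n + 2) => t * lucasU s t (n + 1) + s * lucasU s t n

namespace lucasU
variable {C : Type*} [CommRing C] (s t : C)

@[simp] lemma zero : lucasU s t 0 = 0 := rfl
@[simp] lemma one : lucasU s t 1 = 1 := rfl
lemma add_two (n : ℕ) : lucasU s t (n + 2) = t * lucasU s t (n + 1) + s * lucasU s t n := rfl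

lemma add_add_one (m n : ℕ) : lucasU s t (m + n + 1) =
    lucasU s t (m + 1) * lucasU s t (n + 1) + s * (lucasU s t m * lucasU s t n) := by
  induction n using Nat.twoStepInduction with
  | zero => simp
  | one => rw [add_two, add_two]; simp; ring
  | more n h1 h2 =>
    rw [show m + (n + 2) + 1 = (m + n + 1) + 2 by ring, add_two, h1,
      show m + n + 1 + 1 = m + (n + 1) + 1 by ring, h2, add_two s t (n + 1), add_two s t n]
    ring

/-- The identity of Ocagne for Lucas sequences. -/
lemma ocagne (m n : ℕ) : lucasU s t (m + n) * lucasU s t (n + 1) -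
    lucasU s t (m + n + 1) * lucasU s t n = (-s) ^ n * lucasU s t m := by
  induction n with
  | zero => simp
  | succ n ih =>
    rw [pow_succ, mul_right_comm, ← ih, ← add_assoc, add_two, add_two]
    ring

lemma dvd_mul (m k : ℕ) : lucasU s t m ∣ lucasU s t (m * k) := by
  induction k with
  | zero => simp
  | succ k ih =>
    cases m with
    | zero => simp
    | succ m =>
      rw [show (m + 1) * (k + 1) = (m + 1) * k + m + 1 by ring, add_add_one]
      exact dvd_add (dvd_mul_left _ _) ((ih.mul_right _).mul_left _)

lemma neg_right (n : ℕ) : lucasU s (-t) n = (-1) ^ (n + 1) * lucasU s t n := by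
  induction n using Nat.twoStepInduction with
  | zero => simp
  | one => simp
  | more n h1 h2 => rw [add_two, add_two, h1, h2]; ring

lemma map {D : Type*} [CommRing D] (g : C →+* D) (n : ℕ) :
    g (lucasU s t n) = lucasU (g s) (g t) n := by
  induction n using Nat.twoStepInduction with
  | zero => simp
  | one => simp
  | more n h1 h2 => simp [add_two, h1, h2]

variable {s t}

lemma pow_succ_eq {R : Type*} [Ring R] [Algebra C R] {x : R}
    (hx : x ^ 2 = t • x + s • (1 : R)) (n : ℕ) :
    x ^ (n + 1) = lucasU s t (n + 1) • x + (s * lucasU s t n) • (1 : R) := by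
  induction n with
  | zero => simp
  | succ n ih =>
    rw [pow_succ, ih, add_mul, smul_mul_assoc, ← pow_two, hx, add_two, smul_mul_assoc, one_mul]
    module

lemma relations_of_periodic {i j : ℕ} (hij : j ≤ i) (hg : Nat.gcd (i + 1) (j + 1) = 1)
    (h1 : lucasU s t (i + j + 2) = 0) (h2 : lucasU s t (i + j + 1) = (-s) ^ j)
    (h3 : (-s) ^ (i - j) = 1) :
    lucasU s t (j + 1) = lucasU s t (i + 1) ∧ s * lucasU s t i + lucasU s t (j + 2) = 0 ∧
      IsUnit (lucasU s t (i + 1)) := by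
  rcases hij.eq_or_lt with rfl | hlt
  · obtain rfl : j = 0 := by simpa using hg
    simpa using h1
  have hs : IsUnit (-s) := IsUnit.of_pow_eq_one h3 (by omega)
  have h4 : lucasU s t (i + j + 3) = s * (-s) ^ j := by
    rw [add_two, h1, h2]; ring
  have e1 := ocagne s t (i + 1) (j + 1)
  have e2 := ocagne s t i (j + 1)
  rw [show i + 1 + (j + 1) = i + j + 2 by ring, h1, h4] at e1
  rw [show i + (j + 1) = i + j + 1 by ring, h1, h2] at e2
  have e3 : lucasU s t (j + 1) = lucasU s t (i + 1) := by
    apply (hs.pow (j + 1)).mul_left_cancel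
    rw [← e1]; ring
  refine ⟨e3, ?_, ?_⟩
  · apply (hs.pow (j + 1)).mul_left_cancel
    rw [mul_add, mul_left_comm, ← e2]; ring
  · obtain ⟨k, l, hkl⟩ := exists_mul_eq_mul_add_one (by omega) (by omega) hg
    have d1 := dvd_mul s t (i + 1) k
    have d2 := dvd_mul s t (j + 1) l
    rw [e3] at d2
    rw [hkl] at d1
    have := ocagne s t 1 ((j + 1) * l)
    rw [add_comm 1, one, mul_one] at this
    exact isUnit_of_dvd_unit (this ▸ dvd_sub (d1.mul_left _) (d2.mul_left _)) (hs.pow _)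

lemma periodic_of_relations {i j : ℕ}
    (h1 : lucasU s t (j + 1) = lucasU s t (i + 1))
    (h2 : s * lucasU s t i + lucasU s t (j + 2) = 0) :
    lucasU s t (i + j + 2) = 0 ∧ lucasU s t (i + j + 1) = (-s) ^ j ∧
      (-s) ^ i = (-s) ^ j := by
  have a1 := add_add_one s t i (j + 1)
  have a2 := add_add_one s t i j
  have a3 := ocagne s t 1 j
  have a4 := ocagne s t 1 i
  have b1 := add_two s t j
  have b2 := add_two s t i
  rw [add_comm 1, one, mul_one] at a3 a4
  refine ⟨?_, ?_, ?_⟩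
  · rw [show i + j + 2 = i + (j + 1) + 1 by ring, a1]
    linear_combination lucasU s t (i + 1) * h2 + s * lucasU s t i * h1
  · rw [a2]
    linear_combination a3 + lucasU s t j * h2 - lucasU s t (j + 1) * h1
  · have h3 : lucasU s t (i + 2) + s * lucasU s t j = 0 := by
      linear_combination h2 + b2 - b1 - t * h1
    linear_combination a3 - a4 - (lucasU s t (i + 1) + lucasU s t (j + 1)) * h1 -
      lucasU s t i * h3 + lucasU s t j * h2

end lucasU

section
variable {R : Type*} [Ring R] {y X W : R}

lemma commute_of_relations (hXW : X * W = W * X) (h1 : X * y + y * W = 1) (h2 : y * y = 0) :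
    (X - W) * y = y * (X - W) ∧ W * y + y * X = 1 ∧ X * W * y = y * (X * W) := by
  have e1 : y * X * y = y := by linear_combination (norm := noncomm_ring) y * h1 - h2 * W
  have e2 : y * W * y = y := by linear_combination (norm := noncomm_ring) h1 * y - X * h2
  have e3 : y * X * W * y = 0 := by
    have f1 : y * W = 1 - X * y := eq_sub_of_add_eq' h1
    have f2 : X * y = 1 - y * W := eq_sub_of_add_eq h1
    calc y * X * W * y = y * W * (X * y) := by rw [mul_assoc y X W, hXW]; noncomm_ring
      _ = y * W - y * W * y * W := by rw [f2]; noncomm_ring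
      _ = 0 := by rw [e2, sub_self]
  have e4 : y * (X * X + W * W) * y = 0 := by
    linear_combination (norm := noncomm_ring)
      y * X * h1 * (W * y) + e3 - y * X * X * e2 - e1 * (W * W * y)
  have e5 : (X - W) * y = -(y * W * W * y) := by
    linear_combination (norm := noncomm_ring) X * (e1 - e2) - h1 * ((X - W) * y) + e3 - y * hXW * y
  have e6 : y * (X - W) = y * X * X * y := by
    linear_combination (norm := noncomm_ring) (e1 - e2) * W - y * (X - W) * h1 - e3 + y * hXW * y
  have c : (X - W) * y = y * (X - W) := by
    linear_combination (norm := noncomm_ring) e5 - e6 - e4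
  have z : W * y + y * X = 1 := by
    linear_combination (norm := noncomm_ring) h1 - c
  refine ⟨c, z, ?_⟩
  linear_combination (norm := noncomm_ring) X * z - h1 * X - y * hXW

lemma isUnit_of_relations {x y : R} {i j : ℕ} (hj : 1 ≤ j) (hij : j < i)
    (h1 : x ^ i * y + y * x ^ j = 1) (hq : ∀ r, r * x ^ (i + j) = x ^ (i + j) * r)
    (hu : ∀ r, r * (x ^ i - x ^ j) = (x ^ i - x ^ j) * r) : IsUnit (x ^ (i + j)) := by
  set q := x ^ (i + j) with hq'
  set u := x ^ i - x ^ j with hu'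
  obtain ⟨d, hd⟩ := Nat.exists_eq_add_of_lt hij
  have hui : x ^ i = x ^ j + u := by rw [hu']; abel
  have step (m : ℕ) : ∃ r, x ^ (j + m * (i - j)) = x ^ j + u * r := by
    induction m with
    | zero => exact ⟨0, by simp⟩
    | succ m ih =>
      obtain ⟨r, hr⟩ := ih
      refine ⟨1 + r * x ^ (i - j), ?_⟩
      rw [show j + (m + 1) * (i - j) = j + m * (i - j) + (i - j) by ring, pow_add, hr, add_mul,
        ← pow_add, show j + (i - j) = i by omega, hui]
      noncomm_ring
  obtain ⟨r, hr⟩ := step i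
  have hle : i + j ≤ j + i * (i - j) := by
    have := Nat.le_mul_of_pos_right i (show 0 < i - j by omega)
    omega
  obtain ⟨e, he⟩ := Nat.exists_eq_add_of_le hle
  rw [he, pow_add, ← hq'] at hr
  have hxj : x ^ j = q * x ^ e - u * r := eq_sub_of_add_eq hr.symm
  have base : ∃ a b, 1 = u * a + q * b := by
    refine ⟨y - r * y - y * r, x ^ e * y + y * x ^ e, ?_⟩
    rw [← h1, hui, hxj, mul_sub, ← mul_assoc y, ← mul_assoc y, hq, hu]
    noncomm_ring
  obtain ⟨a, b, hab⟩ := base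
  have pows (n : ℕ) : ∃ a b, 1 = u ^ n * a + q * b := by
    induction n with
    | zero => exact ⟨1, 0, by simp⟩
    | succ n ih =>
      obtain ⟨a', b', h'⟩ := ih
      refine ⟨a * a', u ^ n * b * a' + b', ?_⟩
      have : u ^ n * a' = u ^ n * (u * a + q * b) * a' := by rw [← hab, mul_one]
      rw [h', this, mul_add, ← mul_assoc (u ^ n) q, hq, pow_succ]
      noncomm_ring
  obtain ⟨a', b', h'⟩ := pows (i + j)
  have hu2 : u = x ^ j * (x ^ (i - j) - 1) := by
    rw [mul_sub, ← pow_add, show j + (i - j) = i by omega, mul_one]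
  have hc : Commute (x ^ j) (x ^ (i - j) - 1) :=
    ((Commute.refl x).pow_pow _ _).sub_right (Commute.one_right _)
  obtain ⟨k, rfl⟩ := Nat.exists_eq_add_of_le' hj
  have hu3 : u ^ (i + (k + 1)) = q * (q ^ k * (x ^ (i - (k + 1)) - 1) ^ (i + (k + 1))) := by
    rw [hu2, hc.mul_pow, ← pow_mul, mul_comm (k + 1), pow_mul, ← hq', pow_succ', mul_assoc]
  rw [hu3, mul_assoc, ← mul_add] at h'
  exact ⟨⟨q, _, h'.symm, by rw [hq]; exact h'.symm⟩, rfl⟩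
end


section
variable {C R : Type*} [CommRing C] [Ring R] [Algebra C R]

lemma eq_of_smul_eq_smul (hinj : Function.Injective (algebraMap C R)) {y v w : R}
    (h : v * y + y * w = 1) {a b : C} (hab : a • y = b • y) : a = b := by
  apply hinj
  rw [Algebra.algebraMap_eq_smul_one, Algebra.algebraMap_eq_smul_one, ← h, smul_add, smul_add,
    ← mul_smul_comm a, ← mul_smul_comm b, ← smul_mul_assoc a, ← smul_mul_assoc b, hab]

lemma exists_lucasU_relations (hinj : Function.Injective (algebraMap C R)) {x y : R} {i j : ℕ}
    {a c u q : C} (hij : j ≤ i) (hg : Nat.gcd (i + 1) (j + 1) = 1)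
    (h1 : x ^ (i + 1) * y + y * x ^ (j + 1) = 1) (h2 : y * y = 0)
    (h3 : x ^ (j + 1) * y + y * x ^ (i + 1) = 1)
    (hu : x ^ (i + 1) - x ^ (j + 1) = u • (1 : R)) (hq : x ^ (i + j + 2) = q • (1 : R))
    (hqu : j < i → IsUnit q) (hx : x = a • (1 : R) + c • x ^ (i + 1)) :
    ∃ s t : C, x ^ 2 = t • x + s • (1 : R) ∧ x * y + y * x = t • y + c • (1 : R) ∧
      lucasU s t (i + 1) * c = 1 ∧ lucasU s t (i + j + 2) = 0 ∧
      lucasU s t (i + j + 1) = (-s) ^ j ∧ (-s) ^ (i - j) = 1 := by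
  set X := x ^ (i + 1) with hX
  have hW : x ^ (j + 1) = X - u • (1 : R) := by rw [← hu]; abel
  have hXX : X * X = u • X + q • (1 : R) := by
    rw [← hq, show i + j + 2 = (i + 1) + (j + 1) by ring, pow_add, ← hX, hW, mul_sub,
      mul_smul_comm, mul_one]
    abel
  rw [hW] at h1 h3
  simp only [mul_sub, sub_mul, mul_smul_comm, smul_mul_assoc, one_mul, mul_one] at h1 h3
  have hy : y * X * y = y := by
    have := congrArg (y * ·) h1
    simpa [mul_add, mul_sub, ← mul_assoc, h2] using this
  obtain ⟨s, hs⟩ : ∃ s, s = c * c * q - a * a - a * c * u := ⟨_, rfl⟩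
  obtain ⟨t, ht⟩ : ∃ t, t = 2 * a + c * u := ⟨_, rfl⟩
  have hx2 : x ^ 2 = t • x + s • (1 : R) := by
    rw [pow_two, hx]
    simp only [mul_add, add_mul, mul_smul_comm, smul_mul_assoc, one_mul, mul_one, hXX, hs, ht]
    module
  have hxy : x * y + y * x = t • y + c • (1 : R) := by
    have h4 : X * y = 1 - y * X + u • y := by rw [eq_sub_of_add_eq h1]; abel
    rw [hx]
    simp only [mul_add, add_mul, mul_smul_comm, smul_mul_assoc, one_mul, mul_one, h4, ht]
    module
  have hyxy : y * x * y = c • y := by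
    rw [hx]
    simp [mul_add, add_mul, h2, hy]
  have hW' : y * x ^ (j + 1) * y = y := by
    rw [hW]; simp [mul_sub, sub_mul, h2, hy]
  have key (n : ℕ) : y * x ^ (n + 1) * y = (lucasU s t (n + 1) * c) • y := by
    rw [lucasU.pow_succ_eq hx2]
    simp [mul_add, add_mul, h2, hyxy, mul_smul]
  have hu' : x ^ (i + 1) * y + y * x ^ (j + 1) = 1 := by
    rw [hW, ← hX, mul_sub, mul_smul_comm, mul_one]
    exact h1
  have fi : lucasU s t (i + 1) * c = 1 := by
    apply eq_of_smul_eq_smul hinj hu'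
    rw [← key, ← hX, hy, one_smul]
  have fj : lucasU s t (j + 1) * c = 1 := by
    apply eq_of_smul_eq_smul hinj hu'
    rw [← key, hW', one_smul]
  have fij : lucasU s t (j + 1) = lucasU s t (i + 1) := by
    linear_combination lucasU s t (i + 1) * fj - lucasU s t (j + 1) * fi
  have fs : s * lucasU s t i + lucasU s t (j + 2) = 0 := by
    apply eq_of_smul_eq_smul hinj hu'
    have := hu'
    rw [lucasU.pow_succ_eq hx2, lucasU.pow_succ_eq hx2, fij] at this
    have h5 : x * y = t • y + c • (1 : R) - y * x := eq_sub_of_add_eq hxy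
    simp only [mul_add, add_mul, mul_smul_comm, smul_mul_assoc, one_mul, mul_one, h5] at this
    rw [smul_sub, smul_add, smul_smul _ c, fi, one_smul] at this
    rw [lucasU.add_two, fij, zero_smul, ← sub_eq_zero.mpr this]
    module
  obtain ⟨g1, g2, g3⟩ := lucasU.periodic_of_relations fij fs
  refine ⟨s, t, hx2, hxy, fi, g1, g2, ?_⟩
  rcases hij.eq_or_lt with rfl | hlt
  · simp
  have hqs : q = s * (-s) ^ j := by
    apply hinj
    rw [Algebra.algebraMap_eq_smul_one, Algebra.algebraMap_eq_smul_one, ← hq,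
      lucasU.pow_succ_eq hx2 (i + j + 1), g1, g2, zero_smul, zero_add]
  have hsu : IsUnit ((-s) ^ j) := isUnit_of_mul_isUnit_right (hqs ▸ hqu hlt)
  apply hsu.mul_left_cancel
  rw [← pow_add, Nat.add_sub_cancel' hij, mul_one, g3]

end

/-- An algebra is an algebra over its center. -/
instance centerAlgebra {A R : Type*} [CommRing A] [Ring R] [Algebra A R] :
    Algebra (Subalgebra.center A R) R where
  algebraMap := (Subalgebra.center A R).val.toRingHom
  commutes' z r := (Subalgebra.mem_center_iff.mp z.2 r).symm
  smul_def' _ _ := rfl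

lemma exists_center_relations {A R : Type*} [CommRing A] [Ring R] [Algebra A R] {x y : R} {i j : ℕ}
    (hij : j ≤ i) (hg : Nat.gcd (i + 1) (j + 1) = 1)
    (h1 : x ^ (i + 1) * y + y * x ^ (j + 1) = 1) (h2 : y * y = 0)
    (hgen : ∀ z : R, z * x = x * z → z * y = y * z → z ∈ Subalgebra.center A R) :
    ∃ s t c : Subalgebra.center A R, x ^ 2 = t • x + s • (1 : R) ∧
      x * y + y * x = t • y + c • (1 : R) ∧
      lucasU s t (i + 1) * c = 1 ∧ lucasU s t (i + j + 2) = 0 ∧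
      lucasU s t (i + j + 1) = (-s) ^ j ∧ (-s) ^ (i - j) = 1 := by
  obtain ⟨hu, h3, hq⟩ := commute_of_relations (pow_mul_comm x (i + 1) (j + 1)) h1 h2
  rw [← pow_add, show i + 1 + (j + 1) = i + j + 2 by ring] at hq
  have hxu : Commute (x ^ (i + 1) - x ^ (j + 1)) x :=
    (Commute.pow_self x _).sub_left (Commute.pow_self x _)
  have hxq : Commute (x ^ (i + j + 2)) x := Commute.pow_self x _
  obtain ⟨u, hu⟩ : ∃ u : Subalgebra.center A R, x ^ (i + 1) - x ^ (j + 1) = u :=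
    ⟨⟨_, hgen _ hxu hu⟩, rfl⟩
  obtain ⟨q, hq⟩ : ∃ q : Subalgebra.center A R, x ^ (i + j + 2) = q := ⟨⟨_, hgen _ hxq hq⟩, rfl⟩
  have hone (z : Subalgebra.center A R) : (z : R) = z • (1 : R) := by
    rw [Subalgebra.smul_def, smul_eq_mul, mul_one]
  have hinj : Function.Injective (algebraMap (Subalgebra.center A R) R) := Subtype.val_injective
  have hqu : j < i → IsUnit q := by
    intro hlt
    have hcen (z : Subalgebra.center A R) (r : R) : r * z = z * r :=
      Subalgebra.mem_center_iff.mp z.2 r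
    have := isUnit_of_relations (i := i + 1) (j := j + 1) (by omega) (by omega) h1
      (by rw [show i + 1 + (j + 1) = i + j + 2 by ring, hq]; exact hcen q) (by rw [hu]; exact hcen u)
    rw [show i + 1 + (j + 1) = i + j + 2 by ring, hq] at this
    obtain ⟨v, hv⟩ := this
    have hv' : (↑v⁻¹ : R) ∈ Subalgebra.center A R :=
      Set.units_inv_mem_center (by rw [hv]; exact q.2)
    refine IsUnit.of_mul_eq_one ⟨_, hv'⟩ (Subtype.ext ?_)
    change (q : R) * ↑v⁻¹ = 1
    rw [← hv, Units.mul_inv]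
  obtain ⟨a, c, hx⟩ : ∃ a c : Subalgebra.center A R, x = a • (1 : R) + c • x ^ (i + 1) := by
    rcases hij.eq_or_lt with rfl | hlt
    · obtain rfl : j = 0 := by simpa using hg
      exact ⟨0, 1, by simp⟩
    obtain ⟨k, l, hkl⟩ := exists_mul_eq_mul_add_one (by omega) (by omega) hg
    obtain ⟨p, hp⟩ := (hqu hlt).exists_left_inv
    obtain ⟨k, rfl⟩ : ∃ k', k = k' + 1 := ⟨k - 1, by cases k <;> simp at hkl ⊢⟩
    have hXX : (x ^ (i + 1)) ^ 2 = u • x ^ (i + 1) + q • (1 : R) := by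
      rw [← hone, ← hq, Subalgebra.smul_def, ← hu, smul_eq_mul, sub_mul, ← pow_add, ← pow_add,
        ← pow_mul, show j + 1 + (i + 1) = i + j + 2 by ring, sub_add_cancel]
      congr 1; ring
    have hpow : q ^ l • x = (x ^ (i + 1)) ^ (k + l + 1) := by
      rw [Subalgebra.smul_def, SubmonoidClass.coe_pow, ← hq, smul_eq_mul, ← pow_mul, ← pow_mul,
        ← pow_succ]
      congr 1
      linarith
    rw [lucasU.pow_succ_eq hXX] at hpow
    refine ⟨p ^ l * (q * lucasU q u (k + l)), p ^ l * lucasU q u (k + l + 1), ?_⟩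
    calc x = p ^ l • q ^ l • x := by rw [smul_smul, ← mul_pow, hp, one_pow, one_smul]
      _ = _ := by rw [hpow]; module
  rw [hone] at hu hq
  obtain ⟨s, t, h⟩ := exists_lucasU_relations hinj hij hg h1 h2 h3 hu hq hqu hx
  exact ⟨s, t, c, h⟩

lemma lucasU.sign_relations_iff {C : Type*} [CommRing C] {s t : C} {i j : ℕ}
    (hg : Nat.gcd (i + 1) (j + 1) = 1) :
    (lucasU s t (i + j + 2) = 0 ∧ lucasU s t (i + j + 1) = s ^ j ∧
      s ^ (i - j) = (-1) ^ (i - j)) ↔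
    (lucasU s ((-1) ^ j * t) (i + j + 2) = 0 ∧ lucasU s ((-1) ^ j * t) (i + j + 1) = (-s) ^ j ∧
      (-s) ^ (i - j) = 1) := by
  have h3 : s ^ (i - j) = (-1) ^ (i - j) ↔ (-s) ^ (i - j) = 1 := by
    rcases Nat.even_or_odd (i - j) with h | h
    · rw [h.neg_one_pow, h.neg_pow]
    · rw [h.neg_one_pow, h.neg_pow, neg_eq_iff_eq_neg]
  rcases Nat.even_or_odd j with hj | hj
  · rw [hj.neg_one_pow, hj.neg_pow, one_mul, h3]
  · have hi : Even i := by
      by_contra hi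
      rw [Nat.not_even_iff_odd] at hi
      have := Nat.dvd_gcd (hi.add_one).two_dvd (hj.add_one).two_dvd
      rw [hg] at this
      omega
    have ho : Odd (i + j) := hi.add_odd hj
    rw [hj.neg_one_pow, hj.neg_pow, neg_one_mul, neg_right, neg_right,
      (ho.add_even (by decide : Even 2)).add_one.neg_one_pow, (ho.add_one).add_one.neg_one_pow,
      h3]
    simp

section
variable {B : Type*} [CommRing B]

lemma companion_sq (s t : B) :
    (!![0, s; 1, t] : Matrix (Fin 2) (Fin 2) B) ^ 2 =
      t • !![0, s; 1, t] + s • (1 : Matrix (Fin 2) (Fin 2) B) := by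
  ext a b
  fin_cases a <;> fin_cases b <;> simp [pow_two, add_comm, mul_comm]

lemma companion_relation {s t c : B} {i j : ℕ}
    (hj : lucasU s t (j + 1) = lucasU s t (i + 1))
    (h : s * lucasU s t i + lucasU s t (j + 2) = 0) (hc : lucasU s t (i + 1) * c = 1) :
    (!![0, s; 1, t] : Matrix (Fin 2) (Fin 2) B) ^ (i + 1) * !![0, c; 0, 0] +
      !![0, c; 0, 0] * (!![0, s; 1, t] : Matrix (Fin 2) (Fin 2) B) ^ (j + 1) = 1 := by
  rw [lucasU.pow_succ_eq (companion_sq s t), lucasU.pow_succ_eq (companion_sq s t), hj]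
  rw [lucasU.add_two, hj] at h
  ext a b
  fin_cases a <;> fin_cases b <;>
    simp [Matrix.vecMul, dotProduct, Matrix.mul_apply, Fin.sum_univ_two]
  · linear_combination hc
  · linear_combination c * h
  · linear_combination hc

variable {A R : Type*} [CommRing A] [Algebra A B] [Ring R] [Algebra A R]
  [Algebra B R] [IsScalarTower A B R]

lemma map_algebraMap_of_companion {s t c F : B} (hF : F * c = 1)
    (hB : Algebra.adjoin A {s, t} = ⊤) {x y : R} (hx : x ^ 2 = t • x + s • (1 : R))
    (φ : R →ₐ[A] Matrix (Fin 2) (Fin 2) B)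
    (hφx : φ x = !![0, s; 1, t]) (hφy : φ y = !![0, c; 0, 0]) (b : B) :
    φ (algebraMap B R b) = algebraMap B _ b := by
  have scal (b : B) : ∃ p : B, φ (algebraMap B R b) = p • (1 : Matrix (Fin 2) (Fin 2) B) := by
    have h1 := congrArg φ (Algebra.commutes b x)
    have h2 := congrArg φ (Algebra.commutes b y)
    rw [map_mul, map_mul, hφx] at h1
    rw [map_mul, map_mul, hφy] at h2
    generalize φ (algebraMap B R b) = T at h1 h2
    have a1 := congrFun₂ h1 0 0
    have a2 := congrFun₂ h2 0 1
    have a3 := congrFun₂ h2 1 1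
    simp [Matrix.mul_apply, Fin.sum_univ_two] at a1 a2 a3
    have a4 : T 1 0 = 0 := by linear_combination F * a3 - T 1 0 * hF
    have a5 : T 0 0 = T 1 1 := by linear_combination F * a2 - (T 0 0 - T 1 1) * hF
    refine ⟨T 0 0, ?_⟩
    ext k l
    fin_cases k <;> fin_cases l <;> simp [a1, a4, a5]
  obtain ⟨p, hp⟩ := scal t
  obtain ⟨r, hr⟩ := scal s
  have h := congrArg φ hx
  rw [map_pow, map_add, Algebra.smul_def, Algebra.smul_def, mul_one, map_mul, hp, hr, hφx,
    companion_sq] at h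
  have a1 := congrFun₂ h 0 0
  have a2 := congrFun₂ h 1 0
  simp at a1 a2
  let g : B →ₐ[A] Matrix (Fin 2) (Fin 2) B := φ.comp (IsScalarTower.toAlgHom A B R)
  let g' : B →ₐ[A] Matrix (Fin 2) (Fin 2) B := IsScalarTower.toAlgHom A B _
  have : g = g' := by
    refine AlgHom.ext_of_adjoin_eq_top hB ?_
    rintro z (rfl | rfl)
    · change φ (algebraMap B R _) = algebraMap B _ _
      rw [hr, ← a1, Algebra.algebraMap_eq_smul_one]
    · change φ (algebraMap B R _) = algebraMap B _ _
      rw [hp, ← a2, Algebra.algebraMap_eq_smul_one]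
  exact DFunLike.congr_fun this b

/-- The linear map sending the standard matrix units to the matrix units built from `x` and `y`. -/
def matrixUnitsMap (s t F : B) (x y : R) : Matrix (Fin 2) (Fin 2) B →ₗ[B] R where
  toFun m := m 0 0 • (1 - F • (x * y)) + m 0 1 • F • y + m 1 0 • (x - F • (t • (x * y) + s • y)) +
    m 1 1 • F • (x * y)
  map_add' m m' := by simp only [Matrix.add_apply]; module
  map_smul' b m := by simp only [Matrix.smul_apply, smul_eq_mul, RingHom.id_apply]; module

lemma bijective_of_companion {s t c F : B} (hF : F * c = 1)
    (hB : Algebra.adjoin A {s, t} = ⊤) {x y : R} (hR : Algebra.adjoin A {x, y} = ⊤)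
    (hx : x ^ 2 = t • x + s • (1 : R)) (hxy : x * y + y * x = t • y + c • (1 : R))
    (hy : y * y = 0) (φ : R →ₐ[A] Matrix (Fin 2) (Fin 2) B)
    (hφx : φ x = !![0, s; 1, t]) (hφy : φ y = !![0, c; 0, 0]) : Function.Bijective φ := by
  have hsmul (b : B) (r : R) : φ (b • r) = b • φ r := by
    rw [Algebra.smul_def, map_mul, map_algebraMap_of_companion hF hB hx φ hφx hφy,
      ← Algebra.smul_def]
  have hyx : y * x = t • y + c • (1 : R) - x * y := eq_sub_of_add_eq' hxy
  have hFc (r : R) : F • c • r = r := by rw [smul_smul, hF, one_smul]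
  rw [pow_two] at hx
  have hxx (r : R) : x * (x * r) = t • (x * r) + s • r := by
    rw [← mul_assoc, hx, add_mul, smul_mul_assoc, smul_mul_assoc, one_mul]
  have hyxr (r : R) : y * (x * r) = t • (y * r) + c • r - x * (y * r) := by
    rw [← mul_assoc, hyx, sub_mul, add_mul, smul_mul_assoc, smul_mul_assoc, one_mul, mul_assoc]
  have left (r : R) (m : Matrix (Fin 2) (Fin 2) B) :
      matrixUnitsMap s t F x y (φ r * m) = r * matrixUnitsMap s t F x y m := by
    have hr : r ∈ Algebra.adjoin A {x, y} := hR ▸ Algebra.mem_top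
    induction hr using Algebra.adjoin_induction generalizing m with
    | mem z hz =>
      rcases hz with rfl | rfl
      · simp [hφx, matrixUnitsMap, Matrix.vecMul, dotProduct, Fin.sum_univ_two, mul_add, mul_sub,
          hx, hxx]
        module
      · simp [hφy, matrixUnitsMap, Matrix.vecMul, dotProduct, Fin.sum_univ_two, mul_add, mul_sub,
          hyx, hy, hyxr]
        linear_combination (norm := module)
          (m 1 0 * t + m 0 0) • hFc z - m 1 0 • hFc (x * z)
    | algebraMap a =>
      rw [AlgHom.commutes, ← Algebra.smul_def, ← Algebra.smul_def, ← algebraMap_smul B a m,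
        map_smul, algebraMap_smul]
    | add r r' _ _ h h' => rw [map_add φ, add_mul, map_add, h, h', add_mul]
    | mul r r' _ _ h h' => rw [map_mul φ, mul_assoc, h, h', mul_assoc]
  have hone : matrixUnitsMap s t F x y 1 = 1 := by simp [matrixUnitsMap]
  refine ⟨Function.LeftInverse.injective (g := matrixUnitsMap s t F x y) fun r => ?_,
    Function.RightInverse.surjective (g := matrixUnitsMap s t F x y) fun m => ?_⟩
  · rw [← mul_one (φ r), left, hone, mul_one]
  · ext k l
    simp only [matrixUnitsMap, LinearMap.coe_mk, AddHom.coe_mk, map_add, map_sub, map_mul, map_one,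
      hsmul, hφx, hφy]
    fin_cases k <;> fin_cases l <;> simp
    · linear_combination (m 0 1 - m 1 0 * s) * hF
    · linear_combination (m 1 1 - m 0 0 - m 1 0 * t) * hF

end

lemma fpoly_eq_lucasU (A : Type*) [CommRing A] (n : ℕ) :
    fpoly A n = lucasU (MvPolynomial.X 0) (MvPolynomial.X 1) n := by
  induction n using Nat.twoStepInduction with
  | zero => rfl
  | one => rfl
  | more n h1 h2 => rw [fpoly, lucasU.add_two, h1, h2]

section
variable (A : Type*) [CommRing A] (i j : ℕ)

lemma Xgen_Ygen_relation : Xgen A i j ^ i * Ygen A i j + Ygen A i j * Xgen A i j ^ j = 1 := by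
  simpa [Xgen, Ygen] using RingQuot.mkAlgHom_rel A (MatRel.rel1 (A := A) (i := i) (j := j))

lemma Ygen_mul_self : Ygen A i j * Ygen A i j = 0 := by
  simpa [Ygen, pow_two] using RingQuot.mkAlgHom_rel A (MatRel.rel2 (A := A) (i := i) (j := j))

lemma adjoin_Xgen_Ygen : Algebra.adjoin A {Xgen A i j, Ygen A i j} = ⊤ := by
  have h : Set.range (FreeAlgebra.ι A : Fin 2 → _) =
      {FreeAlgebra.ι A (0 : Fin 2), FreeAlgebra.ι A (1 : Fin 2)} := by
    ext z; simp [Fin.exists_fin_two, eq_comm]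
  rw [Xgen, Ygen, ← Set.image_pair, ← h, ← AlgHom.map_adjoin, FreeAlgebra.adjoin_range_ι,
    Algebra.map_top, AlgHom.range_eq_top]
  exact RingQuot.mkAlgHom_surjective A _

variable {A i j}

lemma exists_algHom_of_relation {S : Type*} [Ring S] [Algebra A S] {v w : S}
    (h1 : v ^ i * w + w * v ^ j = 1) (h2 : w * w = 0) :
    ∃ φ : MatRing A i j →ₐ[A] S, φ (Xgen A i j) = v ∧ φ (Ygen A i j) = w := by
  refine ⟨RingQuot.liftAlgHom A ⟨FreeAlgebra.lift A ![v, w], ?_⟩, ?_, ?_⟩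
  · rintro _ _ (_ | _)
    · simpa using h1
    · simpa [pow_two] using h2
  · simp [Xgen]
  · simp [Ygen]

end

lemma mem_center_of_adjoin_eq_top {A R : Type*} [CommRing A] [Ring R] [Algebra A R] {x y z : R}
    (hR : Algebra.adjoin A {x, y} = ⊤) (hx : z * x = x * z) (hy : z * y = y * z) :
    z ∈ Subalgebra.center A R := by
  rw [Subalgebra.mem_center_iff]
  intro b
  have hb : b ∈ Algebra.adjoin A {x, y} := hR ▸ Algebra.mem_top
  induction hb using Algebra.adjoin_induction with
  | mem w hw =>
    rcases hw with rfl | rfl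
    exacts [hx.symm, hy.symm]
  | algebraMap a => exact Algebra.commutes a z
  | add b b' _ _ h h' => rw [add_mul, mul_add, h, h']
  | mul b b' _ _ h h' => rw [mul_assoc, h', ← mul_assoc, h, mul_assoc]

section
variable {A : Type*} [CommRing A] {i j : ℕ} {I : Ideal (MvPolynomial (Fin 2) A)}

lemma quotient_relations
    (hI : I = Ideal.span {fpoly A (i + j + 2), fpoly A (i + j + 1) - (MvPolynomial.X 0) ^ j,
      (MvPolynomial.X 0) ^ (i - j) - (-1) ^ (i - j)})
    {s t : MvPolynomial (Fin 2) A ⧸ I} (hs : s = Ideal.Quotient.mk I (MvPolynomial.X 0))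
    (ht : t = Ideal.Quotient.mk I (MvPolynomial.X 1)) :
    lucasU s t (i + j + 2) = 0 ∧ lucasU s t (i + j + 1) = s ^ j ∧
      s ^ (i - j) = (-1) ^ (i - j) := by
  have hf (n : ℕ) : lucasU s t n = Ideal.Quotient.mk I (fpoly A n) := by
    rw [fpoly_eq_lucasU, hs, ht]
    exact (lucasU.map _ _ (Ideal.Quotient.mk I) n).symm
  rw [hf, hf, hs]
  refine ⟨?_, ?_, ?_⟩
  · exact Ideal.Quotient.eq_zero_iff_mem.mpr (hI ▸ Ideal.subset_span (by simp))
  · rw [← map_pow]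
    exact Ideal.Quotient.eq.mpr (hI ▸ Ideal.subset_span (by simp))
  · rw [← map_pow, ← map_one (Ideal.Quotient.mk I), ← map_neg, ← map_pow]
    exact Ideal.Quotient.eq.mpr (hI ▸ Ideal.subset_span (by simp))

lemma exists_quotient_lift
    (hI : I = Ideal.span {fpoly A (i + j + 2), fpoly A (i + j + 1) - (MvPolynomial.X 0) ^ j,
      (MvPolynomial.X 0) ^ (i - j) - (-1) ^ (i - j)})
    {C : Type*} [CommRing C] [Algebra A C] {s t : C}
    (h : lucasU s t (i + j + 2) = 0 ∧ lucasU s t (i + j + 1) = s ^ j ∧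
      s ^ (i - j) = (-1) ^ (i - j)) :
    ∃ β : (MvPolynomial (Fin 2) A ⧸ I) →ₐ[A] C,
      β (Ideal.Quotient.mk I (MvPolynomial.X 0)) = s ∧
      β (Ideal.Quotient.mk I (MvPolynomial.X 1)) = t := by
  let g : MvPolynomial (Fin 2) A →ₐ[A] C := MvPolynomial.aeval ![s, t]
  have hg0 : g (MvPolynomial.X 0) = s := by simp [g]
  have hg1 : g (MvPolynomial.X 1) = t := by simp [g]
  have hgf (n : ℕ) : g (fpoly A n) = lucasU s t n := by
    rw [fpoly_eq_lucasU, ← hg0, ← hg1]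
    exact lucasU.map _ _ g.toRingHom n
  have hgI : I ≤ RingHom.ker g := by
    rw [hI, Ideal.span_le]
    rintro _ (rfl | rfl | rfl)
    · simp [RingHom.mem_ker, hgf, h.1]
    · simp [RingHom.mem_ker, hgf, hg0, h.2.1]
    · simp [RingHom.mem_ker, hg0, h.2.2]
  exact ⟨Ideal.Quotient.liftₐ I g fun a ha => hgI ha, hg0, hg1⟩

lemma adjoin_mk_X : Algebra.adjoin A {Ideal.Quotient.mk I (MvPolynomial.X 0),
    Ideal.Quotient.mk I (MvPolynomial.X 1)} = ⊤ := by
  have hr : Set.range (MvPolynomial.X : Fin 2 → MvPolynomial (Fin 2) A) =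
      {MvPolynomial.X 0, MvPolynomial.X 1} := by
    ext z; simp [Fin.exists_fin_two, eq_comm]
  have := (AlgHom.map_adjoin (Ideal.Quotient.mkₐ A I) {MvPolynomial.X 0, MvPolynomial.X 1}).symm
  rw [← hr, MvPolynomial.adjoin_range_X, Algebra.map_top, AlgHom.range_eq_top _ |>.mpr
    (Ideal.Quotient.mkₐ_surjective A I), hr, Set.image_pair] at this
  exact this

end

lemma neg_one_pow_mul_cancel {C : Type*} [CommRing C] (j : ℕ) (a : C) :
    (-1) ^ j * ((-1) ^ j * a) = a := by
  rw [← mul_assoc, ← mul_pow, neg_one_mul, neg_neg, one_pow, one_mul]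

lemma adjoin_pair_neg_one_pow_mul {A B : Type*} [CommRing A] [CommRing B] [Algebra A B] {s t : B}
    (h : Algebra.adjoin A {s, t} = ⊤) (j : ℕ) : Algebra.adjoin A {s, (-1) ^ j * t} = ⊤ := by
  rw [eq_top_iff, ← h, Algebra.adjoin_le_iff]
  rintro z (rfl | rfl)
  · exact Algebra.subset_adjoin (by simp)
  · have h : (-1) ^ j * z ∈ Algebra.adjoin A {s, (-1) ^ j * z} := Algebra.subset_adjoin (by simp)
    have := mul_mem (pow_mem (neg_mem (one_mem _)) j) h
    rwa [neg_one_pow_mul_cancel] at this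

/-- If the coefficients in the relations of `R(A;i,j)` come from a commutative algebra `B`
generated by `s` and `t`, then `R(A;i,j)` is the matrix algebra over `B`. -/
lemma nonempty_algEquiv_of_relations {A B C : Type*} [CommRing A] [CommRing B] [Algebra A B]
    {i j : ℕ} [CommRing C] [Algebra A C] [Algebra C (MatRing A (i + 1) (j + 1))]
    [IsScalarTower A C (MatRing A (i + 1) (j + 1))] {s t d : B} {c : C}
    (hs : lucasU s t (j + 1) = lucasU s t (i + 1)) (ht : s * lucasU s t i + lucasU s t (j + 2) = 0)
    (hd : lucasU s t (i + 1) * d = 1) (hB : Algebra.adjoin A {s, t} = ⊤) (β : B →ₐ[A] C)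
    (hx : Xgen A (i + 1) (j + 1) ^ 2 = β t • Xgen A (i + 1) (j + 1) + β s • 1)
    (hxy : Xgen A (i + 1) (j + 1) * Ygen A (i + 1) (j + 1) +
      Ygen A (i + 1) (j + 1) * Xgen A (i + 1) (j + 1) = β t • Ygen A (i + 1) (j + 1) + c • 1)
    (hc : lucasU (β s) (β t) (i + 1) * c = 1) :
    Nonempty (MatRing A (i + 1) (j + 1) ≃ₐ[A] Matrix (Fin 2) (Fin 2) B) := by
  have hβd : β d = c := by
    have h := congrArg β hd
    rw [map_mul, map_one, show β (lucasU s t (i + 1)) = lucasU (β s) (β t) (i + 1) from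
      lucasU.map _ _ β.toRingHom _] at h
    linear_combination c * h - β d * hc
  let _ : Algebra B (MatRing A (i + 1) (j + 1)) :=
    ((IsScalarTower.toAlgHom A C _).comp β).toRingHom.toAlgebra'
      fun b r => Algebra.commutes (β b) r
  have hsm (b : B) (r : MatRing A (i + 1) (j + 1)) : b • r = β b • r := by
    rw [Algebra.smul_def, Algebra.smul_def]; rfl
  have _ : IsScalarTower A B (MatRing A (i + 1) (j + 1)) := IsScalarTower.of_algebraMap_eq fun a =>
    (AlgHom.commutes ((IsScalarTower.toAlgHom A C _).comp β) a).symm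
  obtain ⟨φ, hφx, hφy⟩ := exists_algHom_of_relation (A := A) (companion_relation hs ht hd)
    (by ext k l; fin_cases k <;> fin_cases l <;> simp)
  refine ⟨AlgEquiv.ofBijective φ (bijective_of_companion hd hB
    (adjoin_Xgen_Ygen A (i + 1) (j + 1)) ?_ ?_ (Ygen_mul_self A _ _) φ hφx hφy)⟩
  · rw [hsm, hsm, hx]
  · rw [hsm, hsm, hβd, hxy]

theorem nonempty_matRing_algEquiv (A : Type*) [CommRing A] {i j : ℕ} (hij : j ≤ i)
    (hg : Nat.gcd (i + 1) (j + 1) = 1) (I : Ideal (MvPolynomial (Fin 2) A))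
    (hI : I = Ideal.span {fpoly A (i + j + 2), fpoly A (i + j + 1) - (MvPolynomial.X 0) ^ j,
      (MvPolynomial.X 0) ^ (i - j) - (-1) ^ (i - j)}) :
    Nonempty (MatRing A (i + 1) (j + 1) ≃ₐ[A]
      Matrix (Fin 2) (Fin 2) (MvPolynomial (Fin 2) A ⧸ I)) := by
  obtain ⟨s, t, c, hx, hxy, hc, r⟩ :=
    exists_center_relations (A := A) hij hg (Xgen_Ygen_relation A (i + 1) (j + 1))
      (Ygen_mul_self A _ _) fun z => mem_center_of_adjoin_eq_top (adjoin_Xgen_Ygen A _ _)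
  obtain ⟨t', rfl⟩ : ∃ t', t = (-1) ^ j * t' := ⟨(-1) ^ j * t, (neg_one_pow_mul_cancel j t).symm⟩
  obtain ⟨β, rfl, rfl⟩ := exists_quotient_lift hI ((lucasU.sign_relations_iff hg).mpr r)
  obtain ⟨b1, b2, b3⟩ := (lucasU.sign_relations_iff hg).mp (quotient_relations hI rfl rfl)
  obtain ⟨f1, f2, f3⟩ := lucasU.relations_of_periodic hij hg b1 b2 b3
  obtain ⟨d, hd⟩ := f3.exists_right_inv
  have _ : IsScalarTower A (Subalgebra.center A (MatRing A (i + 1) (j + 1)))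
      (MatRing A (i + 1) (j + 1)) := ⟨fun a z r => smul_mul_assoc a (z : MatRing A _ _) r⟩
  have hβ : β ((-1) ^ j * Ideal.Quotient.mk I (MvPolynomial.X 1)) =
      (-1) ^ j * β (Ideal.Quotient.mk I (MvPolynomial.X 1)) := by
    rw [map_mul, map_pow, map_neg, map_one]
  rw [← hβ] at hx hxy hc
  exact nonempty_algEquiv_of_relations (C := Subalgebra.center A (MatRing A (i + 1) (j + 1)))
    (c := c) f1 f2 hd (adjoin_pair_neg_one_pow_mul adjoin_mk_X j) β hx hxy hc

theorem stmt11 (A : Type*) [CommRing A] (i j : ℕ) (hi : 1 ≤ i) (hj : 1 ≤ j)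
    (hij : i ≥ j) (hgcd : Nat.gcd i j = 1)
    (I : Ideal (MvPolynomial (Fin 2) A))
    (hI : I = Ideal.span
      {fpoly A (i + j),
       fpoly A (i + j - 1) - (MvPolynomial.X 0) ^ (j - 1),
       (MvPolynomial.X 0) ^ (i - j) - (-1) ^ (i - j)}) :
    Nonempty (MatRing A i j ≃ₐ[A]
      Matrix (Fin 2) (Fin 2) (MvPolynomial (Fin 2) A ⧸ I)) := by
  obtain ⟨i, rfl⟩ := Nat.exists_eq_add_of_le' hi
  obtain ⟨j, rfl⟩ := Nat.exists_eq_add_of_le' hj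
  refine nonempty_matRing_algEquiv A (by omega) hgcd I ?_
  rw [hI, show i + 1 + (j + 1) = i + j + 2 by ring, Nat.add_sub_cancel j 1, Nat.add_sub_add_right]
  rfl
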